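/- Let s ∈ (0,1), λ₁ > 0, r₁ ≥ min(s, 1/2) − s, and r₂ ≥ min(1−s, 1/2) − s. For λ > 0 define ψ_{s,λ}(y) = ψ_s(√λ · y), where ψ_s(z) = (2^{1−s}/Γ(s)) z^s K_s(z). Then there exist constants c₁ > 0, depending only on r₁, s, and λ₁, and c₂ > 0, depending only on r₂, s, and λ₁, such that for every λ ≥ λ₁ and every y ≥ 1 it holds |y^{r₁} ψ_{s,λ}(y)| ≤ c₁ λ^{−r₁/2} e^{−(√λ/2) y} and |y^{r₂} ψ_{s,λ}'(y)| ≤ c₂ λ^{−r₂/2} e^{−(√λ/2) y}. -/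

import Mathlib

/-- The modified Bessel function of the second kind,
`K_ν(z) = ∫₀^∞ exp(−z cosh t) cosh(ν t) dt`. -/
noncomputable def besselK (ν z : ℝ) : ℝ :=
  ∫ t in Set.Ioi (0:ℝ), Real.exp (-z * Real.cosh t) * Real.cosh (ν * t)

/-- `ψ_s(z) = (2^{1−s}/Γ(s)) z^s K_s(z)`. -/
noncomputable def psi (s z : ℝ) : ℝ :=
  (2 ^ (1 - s) / Real.Gamma s) * z ^ s * besselK s z

/-!
Since `cosh t ≥ 1`, moving the argument of `K_ν` from `a` up to `z` multiplies the integrand by at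
most `exp (-(z - a))`, so `K_ν z ≤ exp (-(z - a)) * K_ν a`. Giving up a little of this decay
absorbs any power of `z` on the half-line `z ≥ a > 0`, for every rate `δ < 1`. The identity
`(z ^ s * K_s z)' = -(z ^ s * K_{s-1} z)` makes the estimate for `ψ'` one of the same kind, and
substituting `z = √l * y` gives the scaled bounds.
-/

open Asymptotics Filter MeasureTheory Real Set Topology

section Kernel

variable {z : ℝ}

lemma exp_neg_mul_cosh_isLittleO_exp_neg_mul (hz : 0 < z) (b : ℝ) :
    (fun t ↦ exp (-z * cosh t)) =o[atTop] fun t ↦ exp (-b * t) := by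
  have half_exp_le_cosh (t : ℝ) : exp t / 2 ≤ cosh t := by
    rw [cosh_eq]
    linarith [exp_pos (-t)]
  have cosh_to_exp : (fun t ↦ exp (-z * cosh t)) =O[atTop] fun t ↦ exp (-(z / 2) * exp t) := by
    refine .of_norm_le fun t ↦ ?_
    rw [norm_of_nonneg (exp_pos _).le, exp_le_exp]
    linarith [mul_le_mul_of_nonneg_left (half_exp_le_cosh t) hz.le]
  have exp_to_rpow : (fun t ↦ exp (-(z / 2) * exp t)) =o[atTop] fun t ↦ exp t ^ (-b) :=
    (isLittleO_exp_neg_mul_rpow_atTop (half_pos hz) (-b)).comp_tendsto tendsto_exp_atTop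
  refine cosh_to_exp.trans_isLittleO (exp_to_rpow.congr_right fun t ↦ ?_)
  rw [← exp_mul, mul_comm]

lemma cosh_le_exp_abs (x : ℝ) : cosh x ≤ exp |x| := by
  rw [cosh_eq]
  linarith [exp_le_exp.2 (le_abs_self x), exp_le_exp.2 (neg_le_abs x)]

lemma abs_sinh_le_cosh (x : ℝ) : |sinh x| ≤ cosh x := by
  rw [abs_sinh, ← cosh_abs]
  exact (sinh_lt_cosh _).le

lemma exp_neg_mul_cosh_mul_cosh_isBigO_exp_neg (hz : 0 < z) (ν : ℝ) :
    (fun t ↦ exp (-z * cosh t) * cosh (ν * t)) =O[atTop] fun t ↦ exp (-1 * t) := by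
  have cosh_isBigO : (fun t ↦ cosh (ν * t)) =O[atTop] fun t ↦ exp (|ν| * t) := by
    refine .of_bound' ((eventually_ge_atTop 0).mono fun t ht ↦ ?_)
    rw [norm_of_nonneg (cosh_pos _).le, norm_of_nonneg (exp_pos _).le]
    simpa only [abs_mul, abs_of_nonneg ht] using cosh_le_exp_abs (ν * t)
  refine ((exp_neg_mul_cosh_isLittleO_exp_neg_mul hz (|ν| + 1)).isBigO.mul cosh_isBigO).congr_right
    fun t ↦ ?_
  rw [← exp_add]
  ring_nf

lemma integrableOn_exp_neg_mul_cosh_mul_cosh (hz : 0 < z) (ν : ℝ) :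
    IntegrableOn (fun t ↦ exp (-z * cosh t) * cosh (ν * t)) (Ioi 0) :=
  integrable_of_isBigO_exp_neg one_pos (by fun_prop)
    (exp_neg_mul_cosh_mul_cosh_isBigO_exp_neg hz ν)

lemma tendsto_exp_neg_mul_cosh_mul_sinh (hz : 0 < z) (ν : ℝ) :
    Tendsto (fun t ↦ exp (-z * cosh t) * sinh (ν * t)) atTop (𝓝 0) := by
  have sinh_isBigO : (fun t ↦ exp (-z * cosh t) * sinh (ν * t)) =O[atTop]
      fun t ↦ exp (-z * cosh t) * cosh (ν * t) :=
    (isBigO_refl _ _).mul <| .of_norm_le fun t ↦ abs_sinh_le_cosh (ν * t)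
  refine (sinh_isBigO.trans (exp_neg_mul_cosh_mul_cosh_isBigO_exp_neg hz ν)).trans_tendsto ?_
  simpa only [neg_mul, one_mul, Function.comp_def] using tendsto_exp_neg_atTop_nhds_zero

end Kernel

section BesselK

variable {a z : ℝ}

lemma besselK_pos (hz : 0 < z) (ν : ℝ) : 0 < besselK ν z := by
  have kernel_pos (t : ℝ) : 0 < exp (-z * cosh t) * cosh (ν * t) :=
    mul_pos (exp_pos _) (cosh_pos _)
  refine (integral_pos_iff_support_of_nonneg (fun t ↦ (kernel_pos t).le)
    (integrableOn_exp_neg_mul_cosh_mul_cosh hz ν)).2 ?_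
  rw [Function.support_eq_univ fun t ↦ (kernel_pos t).ne']
  simp

lemma besselK_le_exp_mul_besselK (ha : 0 < a) (haz : a ≤ z) (ν : ℝ) :
    besselK ν z ≤ exp (-(z - a)) * besselK ν a := by
  rw [besselK, besselK, ← integral_const_mul]
  refine integral_mono (integrableOn_exp_neg_mul_cosh_mul_cosh (ha.trans_le haz) ν)
    ((integrableOn_exp_neg_mul_cosh_mul_cosh ha ν).const_mul _) fun t ↦ ?_
  have exponent_le : -z * cosh t ≤ -(z - a) + -a * cosh t := by
    linarith [mul_le_mul_of_nonneg_left (one_le_cosh t) (sub_nonneg.2 haz)]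
  have := cosh_pos (ν * t)
  calc exp (-z * cosh t) * cosh (ν * t)
      ≤ exp (-(z - a) + -a * cosh t) * cosh (ν * t) := by gcongr
    _ = exp (-(z - a)) * (exp (-a * cosh t) * cosh (ν * t)) := by rw [exp_add, mul_assoc]

lemma cosh_add_one_mul_add_cosh_sub_one_mul (ν t : ℝ) :
    cosh ((ν + 1) * t) + cosh ((ν - 1) * t) = 2 * (cosh t * cosh (ν * t)) := by
  rw [add_mul, sub_mul, one_mul, cosh_add, cosh_sub]
  ring

lemma cosh_add_one_mul_sub_cosh_sub_one_mul (ν t : ℝ) :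
    cosh ((ν + 1) * t) - cosh ((ν - 1) * t) = 2 * (sinh t * sinh (ν * t)) := by
  rw [add_mul, sub_mul, one_mul, cosh_add, cosh_sub]
  ring

lemma exp_neg_mul_cosh_mul_cosh_mul_cosh_eq (z ν t : ℝ) :
    exp (-z * cosh t) * (cosh t * cosh (ν * t)) =
      (exp (-z * cosh t) * cosh ((ν + 1) * t) + exp (-z * cosh t) * cosh ((ν - 1) * t)) / 2 := by
  rw [← mul_add, cosh_add_one_mul_add_cosh_sub_one_mul]
  ring

lemma integrableOn_exp_neg_mul_cosh_mul_cosh_mul_cosh (hz : 0 < z) (ν : ℝ) :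
    IntegrableOn (fun t ↦ exp (-z * cosh t) * (cosh t * cosh (ν * t))) (Ioi 0) := by
  simp only [exp_neg_mul_cosh_mul_cosh_mul_cosh_eq]
  exact ((integrableOn_exp_neg_mul_cosh_mul_cosh hz _).add
    (integrableOn_exp_neg_mul_cosh_mul_cosh hz _)).div_const 2

lemma integral_exp_neg_mul_cosh_mul_cosh_mul_cosh (hz : 0 < z) (ν : ℝ) :
    ∫ t in Ioi 0, exp (-z * cosh t) * (cosh t * cosh (ν * t)) =
      (besselK (ν + 1) z + besselK (ν - 1) z) / 2 := by
  simp only [exp_neg_mul_cosh_mul_cosh_mul_cosh_eq]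
  rw [integral_div, integral_add (integrableOn_exp_neg_mul_cosh_mul_cosh hz _)
    (integrableOn_exp_neg_mul_cosh_mul_cosh hz _), besselK, besselK]

lemma hasDerivAt_besselK (hz : 0 < z) (ν : ℝ) :
    HasDerivAt (besselK ν) (-((besselK (ν + 1) z + besselK (ν - 1) z) / 2)) z := by
  let kernel' (x t : ℝ) : ℝ := -(exp (-x * cosh t) * (cosh t * cosh (ν * t)))
  have integrable_kernel' {x : ℝ} (hx : 0 < x) : IntegrableOn (kernel' x) (Ioi 0) :=
    (integrableOn_exp_neg_mul_cosh_mul_cosh_mul_cosh hx ν).neg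
  have norm_kernel'_le (t : ℝ) {x : ℝ} (hx : x ∈ Ioi (z / 2)) :
      ‖kernel' x t‖ ≤ ‖kernel' (z / 2) t‖ := by
    have := cosh_pos t
    simp only [kernel', norm_neg, norm_mul, norm_of_nonneg (exp_pos _).le]
    gcongr
    exact hx.le
  have hasDerivAt_kernel (t x : ℝ) :
      HasDerivAt (fun x ↦ exp (-x * cosh t) * cosh (ν * t)) (kernel' x t) x := by
    refine ((((hasDerivAt_neg x).mul_const (cosh t)).exp).mul_const (cosh (ν * t))).congr_deriv ?_
    simp only [kernel']
    ring
  rw [← integral_exp_neg_mul_cosh_mul_cosh_mul_cosh hz, ← integral_neg]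
  exact (hasDerivAt_integral_of_dominated_loc_of_deriv_le (Ioi_mem_nhds (half_lt_self hz))
    (F := fun x t ↦ exp (-x * cosh t) * cosh (ν * t))
    (.of_forall fun x ↦ Continuous.aestronglyMeasurable (by fun_prop))
    (integrableOn_exp_neg_mul_cosh_mul_cosh hz ν)
    (integrable_kernel' hz).aestronglyMeasurable
    (.of_forall fun t x hx ↦ norm_kernel'_le t hx)
    (integrable_kernel' (half_pos hz)).norm
    (.of_forall fun t x _ ↦ hasDerivAt_kernel t x)).2

/- Integrate the derivative of `t ↦ exp (-z * cosh t) * sinh (ν * t)`, which vanishes at both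
ends of `(0, ∞)`. -/
lemma mul_besselK_add_one_sub_besselK_sub_one (hz : 0 < z) (ν : ℝ) :
    z * (besselK (ν + 1) z - besselK (ν - 1) z) = 2 * ν * besselK ν z := by
  let K (μ t : ℝ) : ℝ := exp (-z * cosh t) * cosh (μ * t)
  have integrable_K (μ : ℝ) : IntegrableOn (K μ) (Ioi 0) :=
    integrableOn_exp_neg_mul_cosh_mul_cosh hz μ
  have hasDerivAt_boundary (t : ℝ) : HasDerivAt (fun t ↦ exp (-z * cosh t) * sinh (ν * t))
      (ν * K ν t - z / 2 * (K (ν + 1) t - K (ν - 1) t)) t := by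
    have h_exp : HasDerivAt (fun t ↦ exp (-z * cosh t)) (exp (-z * cosh t) * (-z * sinh t)) t :=
      ((hasDerivAt_cosh t).const_mul (-z)).exp
    have h_sinh : HasDerivAt (fun t ↦ sinh (ν * t)) (cosh (ν * t) * ν) t :=
      (hasDerivAt_const_mul ν).sinh
    refine (h_exp.mul h_sinh).congr_deriv ?_
    simp only [K]
    rw [← mul_sub, cosh_add_one_mul_sub_cosh_sub_one_mul]
    ring
  have integrable_sub : IntegrableOn (fun t ↦ K (ν + 1) t - K (ν - 1) t) (Ioi 0) :=
    (integrable_K (ν + 1)).sub (integrable_K (ν - 1))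
  have integral_eq_zero := integral_Ioi_of_hasDerivAt_of_tendsto'
    (fun t _ ↦ hasDerivAt_boundary t)
    (((integrable_K ν).const_mul ν).sub (integrable_sub.const_mul (z / 2)))
    (tendsto_exp_neg_mul_cosh_mul_sinh hz ν)
  rw [integral_sub ((integrable_K ν).const_mul ν) (integrable_sub.const_mul (z / 2)),
    integral_const_mul, integral_const_mul,
    integral_sub (integrable_K (ν + 1)) (integrable_K (ν - 1)), mul_zero, sinh_zero, mul_zero,
    sub_zero] at integral_eq_zero
  simp only [besselK]
  linarith

lemma hasDerivAt_rpow_mul_besselK (hz : 0 < z) (ν : ℝ) :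
    HasDerivAt (fun x ↦ x ^ ν * besselK ν x) (-(z ^ ν * besselK (ν - 1) z)) z := by
  refine ((hasDerivAt_rpow_const (.inl hz.ne')).mul (hasDerivAt_besselK hz ν)).congr_deriv ?_
  have recurrence := mul_besselK_add_one_sub_besselK_sub_one hz ν
  rw [rpow_sub_one hz.ne']
  field_simp
  linear_combination -recurrence

lemma hasDerivAt_psi (hz : 0 < z) (s : ℝ) :
    HasDerivAt (psi s) (-(2 ^ (1 - s) / Gamma s * z ^ s * besselK (s - 1) z)) z := by
  refine (((hasDerivAt_rpow_mul_besselK hz s).const_mul (2 ^ (1 - s) / Gamma s)).congr_deriv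
    ?_).congr_of_eventuallyEq (.of_forall fun x ↦ ?_)
  · ring
  · simp only [psi, mul_assoc]

end BesselK

section Decay

variable {a δ : ℝ}

lemma exists_rpow_le_mul_exp {ε : ℝ} (ha : 0 < a) (hε : 0 < ε) (p : ℝ) :
    ∃ C > 0, ∀ z, a ≤ z → z ^ p ≤ C * exp (ε * z) := by
  obtain ⟨M, hM⟩ := eventually_atTop.1
    ((isLittleO_rpow_exp_pos_mul_atTop p hε).bound one_pos)
  have h_cont : ContinuousOn (fun z : ℝ ↦ z ^ p) (Icc a M) :=
    continuousOn_id.rpow_const fun z hz ↦ .inl (ha.trans_le hz.1).ne'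
  obtain ⟨B, hB⟩ := isCompact_Icc.exists_bound_of_continuousOn h_cont
  refine ⟨max B 1, by positivity, fun z hz ↦ ?_⟩
  have hz_pos : 0 < z := ha.trans_le hz
  rcases le_total M z with hMz | hzM
  · calc z ^ p ≤ 1 * exp (ε * z) := by
          simpa only [norm_of_nonneg (exp_pos _).le] using (le_norm_self _).trans (hM z hMz)
      _ ≤ max B 1 * exp (ε * z) := by
          gcongr
          exact le_max_right _ _
  · calc z ^ p ≤ B := (le_norm_self _).trans (hB z ⟨hz, hzM⟩)
      _ ≤ max B 1 := le_max_left _ _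
      _ ≤ max B 1 * exp (ε * z) :=
          le_mul_of_one_le_right (by positivity) (one_le_exp (by positivity))

lemma exists_rpow_mul_besselK_le (ha : 0 < a) (hδ : δ < 1) (ν p : ℝ) :
    ∃ C > 0, ∀ z, a ≤ z → z ^ p * besselK ν z ≤ C * exp (-δ * z) := by
  obtain ⟨C, hC, rpow_le⟩ := exists_rpow_le_mul_exp ha (sub_pos.2 hδ) p
  have hK := besselK_pos ha ν
  refine ⟨C * exp a * besselK ν a, by positivity, fun z hz ↦ ?_⟩
  have exp_split : exp ((1 - δ) * z) * exp (-(z - a)) = exp a * exp (-δ * z) := by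
    rw [← exp_add, ← exp_add]
    ring_nf
  calc z ^ p * besselK ν z
      ≤ C * exp ((1 - δ) * z) * (exp (-(z - a)) * besselK ν a) :=
        mul_le_mul (rpow_le z hz) (besselK_le_exp_mul_besselK ha hz ν)
          (besselK_pos (ha.trans_le hz) ν).le (by positivity)
    _ = C * (exp ((1 - δ) * z) * exp (-(z - a))) * besselK ν a := by ring
    _ = C * exp a * besselK ν a * exp (-δ * z) := by
        rw [exp_split]
        ring

lemma exists_abs_mul_rpow_mul_besselK_le (ha : 0 < a) (hδ : δ < 1) {c : ℝ} (hc : c ≠ 0)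
    (ν p : ℝ) : ∃ C > 0, ∀ z, a ≤ z → |c * (z ^ p * besselK ν z)| ≤ C * exp (-δ * z) := by
  obtain ⟨C, hC, besselK_le⟩ := exists_rpow_mul_besselK_le ha hδ ν p
  refine ⟨|c| * C, by positivity, fun z hz ↦ ?_⟩
  have hz_pos : 0 < z := ha.trans_le hz
  have hK := besselK_pos hz_pos ν
  rw [abs_mul, abs_of_pos (by positivity : 0 < z ^ p * besselK ν z), mul_assoc]
  exact mul_le_mul_of_nonneg_left (besselK_le z hz) (abs_nonneg c)

variable {s : ℝ}

lemma two_rpow_div_Gamma_ne_zero (hs : ∀ n : ℕ, s ≠ -n) : (2 : ℝ) ^ (1 - s) / Gamma s ≠ 0 :=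
  div_ne_zero (by positivity) (Gamma_ne_zero hs)

lemma exists_abs_rpow_mul_psi_le (hs : ∀ n : ℕ, s ≠ -n) (ha : 0 < a) (hδ : δ < 1) (p : ℝ) :
    ∃ C > 0, ∀ z, a ≤ z → |z ^ p * psi s z| ≤ C * exp (-δ * z) := by
  obtain ⟨C, hC, besselK_le⟩ := exists_abs_mul_rpow_mul_besselK_le ha hδ
    (two_rpow_div_Gamma_ne_zero hs) s (p + s)
  refine ⟨C, hC, fun z hz ↦ (congrArg abs ?_).trans_le (besselK_le z hz)⟩
  rw [psi, rpow_add (ha.trans_le hz)]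
  ring

lemma exists_abs_rpow_mul_mul_deriv_psi_le (hs : ∀ n : ℕ, s ≠ -n) (ha : 0 < a) (hδ : δ < 1)
    (p : ℝ) : ∃ C > 0, ∀ z, a ≤ z → |z ^ p * (z * deriv (psi s) z)| ≤ C * exp (-δ * z) := by
  obtain ⟨C, hC, besselK_le⟩ := exists_abs_mul_rpow_mul_besselK_le ha hδ
    (neg_ne_zero.2 (two_rpow_div_Gamma_ne_zero hs)) (s - 1) (p + 1 + s)
  refine ⟨C, hC, fun z hz ↦ (congrArg abs ?_).trans_le (besselK_le z hz)⟩
  have hz_pos : 0 < z := ha.trans_le hz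
  rw [(hasDerivAt_psi hz_pos s).deriv, rpow_add hz_pos, rpow_add hz_pos, rpow_one]
  ring

end Decay

lemma rpow_eq_rpow_mul_sqrt_mul_rpow {l y : ℝ} (hl : 0 < l) (hy : 0 ≤ y) (r : ℝ) :
    y ^ r = l ^ (-(r / 2)) * (√l * y) ^ r := by
  rw [mul_rpow (sqrt_nonneg l) hy, sqrt_eq_rpow, ← rpow_mul hl.le, ← mul_assoc, ← rpow_add hl,
    show -(r / 2) + 1 / 2 * r = 0 by ring, rpow_zero, one_mul]

lemma abs_rpow_mul_comp_sqrt_mul_le {f : ℝ → ℝ} {l y r C δ : ℝ} (hl : 0 < l) (hy : 0 ≤ y)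
    (hf : |(√l * y) ^ r * f (√l * y)| ≤ C * exp (-δ * (√l * y))) :
    |y ^ r * f (√l * y)| ≤ C * l ^ (-(r / 2)) * exp (-(√l * δ) * y) := by
  have hl_rpow : 0 < l ^ (-(r / 2)) := by positivity
  rw [rpow_eq_rpow_mul_sqrt_mul_rpow hl hy, mul_assoc, abs_mul, abs_of_pos hl_rpow]
  calc l ^ (-(r / 2)) * |(√l * y) ^ r * f (√l * y)|
      ≤ l ^ (-(r / 2)) * (C * exp (-δ * (√l * y))) := by gcongr
    _ = C * l ^ (-(r / 2)) * exp (-(√l * δ) * y) := by ring_nf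

theorem scaled_psi_exp_decay_general {s lambda₁ y₀ δ : ℝ} (hs : ∀ n : ℕ, s ≠ -n)
    (hl : 0 < lambda₁) (hy₀ : 0 < y₀) (hδ : δ < 1) (r₁ r₂ : ℝ) :
    ∃ c₁ > 0, ∃ c₂ > 0, ∀ l : ℝ, lambda₁ ≤ l → ∀ y : ℝ, y₀ ≤ y →
      |y ^ r₁ * psi s (√l * y)| ≤ c₁ * l ^ (-(r₁ / 2)) * exp (-(√l * δ) * y) ∧
      |y ^ r₂ * deriv (fun t : ℝ ↦ psi s (√l * t)) y| ≤
        c₂ * l ^ (-(r₂ / 2)) * exp (-(√l * δ) * y) := by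
  have ha : 0 < √lambda₁ * y₀ := by positivity
  obtain ⟨c₁, hc₁, psi_le⟩ := exists_abs_rpow_mul_psi_le hs ha hδ r₁
  obtain ⟨C, hC, deriv_le⟩ := exists_abs_rpow_mul_mul_deriv_psi_le hs ha hδ r₂
  refine ⟨c₁, hc₁, y₀⁻¹ * C, by positivity, fun l hll y hy ↦ ?_⟩
  have hl_pos : 0 < l := hl.trans_le hll
  have hy_pos : 0 < y := hy₀.trans_le hy
  have hz : √lambda₁ * y₀ ≤ √l * y := by gcongr
  refine ⟨abs_rpow_mul_comp_sqrt_mul_le hl_pos hy_pos.le (psi_le _ hz), ?_⟩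
  have scaled_deriv_le := abs_rpow_mul_comp_sqrt_mul_le (f := fun z ↦ z * deriv (psi s) z)
    hl_pos hy_pos.le (deriv_le _ hz)
  have deriv_eq : y ^ r₂ * deriv (fun t : ℝ ↦ psi s (√l * t)) y =
      y⁻¹ * (y ^ r₂ * (√l * y * deriv (psi s) (√l * y))) := by
    rw [deriv_comp_mul_left, smul_eq_mul]
    field_simp
  rw [deriv_eq, abs_mul, abs_of_pos (inv_pos.2 hy_pos)]
  calc y⁻¹ * |y ^ r₂ * (√l * y * deriv (psi s) (√l * y))|
      ≤ y₀⁻¹ * (C * l ^ (-(r₂ / 2)) * exp (-(√l * δ) * y)) := by gcongr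
    _ = y₀⁻¹ * C * l ^ (-(r₂ / 2)) * exp (-(√l * δ) * y) := by ring

/-- Exponential decay of the scaled functions `ψ_{s,λ}` and their
derivatives, uniformly in `λ ≥ λ₁`. -/
theorem scaled_psi_exp_decay (s lambda₁ r₁ r₂ : ℝ) (hs : s ∈ Set.Ioo (0:ℝ) 1)
    (hl : 0 < lambda₁)
    (hr₁ : min s (1/2) - s ≤ r₁) (hr₂ : min (1 - s) (1/2) - s ≤ r₂) :
    ∃ c₁ > 0, ∃ c₂ > 0, ∀ l : ℝ, lambda₁ ≤ l → ∀ y : ℝ, 1 ≤ y →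
      |y ^ r₁ * psi s (Real.sqrt l * y)| ≤
        c₁ * l ^ (-(r₁ / 2)) * Real.exp (-(Real.sqrt l / 2) * y) ∧
      |y ^ r₂ * deriv (fun t : ℝ => psi s (Real.sqrt l * t)) y| ≤
        c₂ * l ^ (-(r₂ / 2)) * Real.exp (-(Real.sqrt l / 2) * y) := by
  have hs_ne (n : ℕ) : s ≠ -n := ((neg_nonpos.2 n.cast_nonneg).trans_lt hs.1).ne'
  simpa only [div_eq_mul_inv] using
    scaled_psi_exp_decay_general hs_ne hl one_pos two_inv_lt_one r₁ r₂
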